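/- Let n ≥ 3 and K ≥ 1 be integers and let M ∈ SL_n(ℤ) be a row matrix or a column matrix all of whose entries lie in {−K+1, …, 0, …, K−1}. Then M can be written as a product of at most 1200·n·ln K + 400·n elements of {A_n, A_n⁻¹, B_n, B_n⁻¹}. -/

import Mathlib

/-- The matrix `A_n`: 1's on the diagonal, an additional 1 in the (1,2) entry
(zero-indexed: (0,1)), and 0's elsewhere. -/
def Amat (n : ℕ) : Matrix (Fin n) (Fin n) ℤ :=
  Matrix.of fun i j => if i = j then 1 else if (i : ℕ) = 0 ∧ (j : ℕ) = 1 then 1 else 0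

/-- The matrix `B_n`: 1 in each entry (i, i+1), (−1)^(n−1) in the (n,1) entry
(zero-indexed: (n-1,0)), and 0's elsewhere. -/
def Bmat (n : ℕ) : Matrix (Fin n) (Fin n) ℤ :=
  Matrix.of fun i j => if (j : ℕ) = (i : ℕ) + 1 then 1
    else if (i : ℕ) = n - 1 ∧ (j : ℕ) = 0 then (-1 : ℤ) ^ (n - 1) else 0

/-- A row matrix: all diagonal entries are 1 and it differs from the identity only in
one row. -/
def IsRowMatrix {n : ℕ} (M : Matrix (Fin n) (Fin n) ℤ) : Prop :=
  (∀ i, M i i = 1) ∧ ∃ r : Fin n, ∀ i j, i ≠ r → i ≠ j → M i j = 0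

/-- A column matrix: all diagonal entries are 1 and it differs from the identity only
in one column. -/
def IsColumnMatrix {n : ℕ} (M : Matrix (Fin n) (Fin n) ℤ) : Prop :=
  (∀ i, M i i = 1) ∧ ∃ c : Fin n, ∀ i j, j ≠ c → i ≠ j → M i j = 0

/-! Write `e₀, …, eₙ₋₁` for the standard basis. Multiplying the elementary matrices at the positions
`(k, k + 1)`, which are the conjugates `B⁻ᵏ A Bᵏ`, costs only `O(n)` letters by Horner's scheme,
and up to a power of `A`, two such sweeps conjugate `A` to `1 + e₀ d` for any row `d` with entries
in `{-1, 0, 1}` and `d 0 = 0`. In particular there is a short word `g` that acts as a hyperbolic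
matrix of trace `3` on the plane of `e₀` and `eₙ₋₁`, so that `gᵏ e₀ + g⁻ᵏ e₀` is `e₀` times the
Lucas number `L_{2k}`, while `g` fixes every row that vanishes at the positions `0` and `n - 1`.
Expanding such a row `v` in the scale of these Lucas numbers with digits in `{-1, 0, 1}`, and
applying Horner's scheme again, now to the powers of `g`, produces `1 + e₀ v` in `O(n log K)`
letters. Conjugating by a power of `B` moves the first row to any other one, and the automorphism
sending a matrix to the reflection of its inverse in the antidiagonal, which almost preserves the
generators, turns columns into rows. -/

open Matrix
open Matrix.SpecialLinearGroup (coe_mul coe_one)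

section Words

variable {G H : Type*} [Group G] [Group H] {S : Set G} {L L' : ℕ} {g x : G}

/-- `g` is a product of at most `L` elements of `S` and their inverses, i.e. the word length of `g`
with respect to `S` is at most `L`. -/
def HasWord (S : Set G) (L : ℕ) (g : G) : Prop :=
  ∃ l : List G, l.length ≤ L ∧ (∀ x ∈ l, x ∈ S ∨ x⁻¹ ∈ S) ∧ l.prod = g

namespace HasWord

lemma mono (h : HasWord S L g) (hL : L ≤ L') : HasWord S L' g :=
  let ⟨l, hl, h⟩ := h
  ⟨l, hl.trans hL, h⟩

lemma one : HasWord S 0 1 := ⟨[], by simp⟩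

lemma of_mem (hg : g ∈ S) : HasWord S 1 g := ⟨[g], by simp [hg]⟩

lemma mul (hg : HasWord S L g) (hx : HasWord S L' x) : HasWord S (L + L') (g * x) := by
  obtain ⟨l, hl, hlS, rfl⟩ := hg
  obtain ⟨k, hk, hkS, rfl⟩ := hx
  refine ⟨l ++ k, by simp only [List.length_append]; omega, fun y hy => ?_, List.prod_append⟩
  exact (List.mem_append.1 hy).elim (hlS y) (hkS y)

lemma inv (hg : HasWord S L g) : HasWord S L g⁻¹ := by
  obtain ⟨l, hl, hlS, rfl⟩ := hg
  refine ⟨(l.map fun y => y⁻¹).reverse, by simpa, fun y hy => ?_, (l.prod_inv_reverse).symm⟩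
  obtain ⟨z, hz, rfl⟩ := List.mem_map.1 (List.mem_reverse.1 hy)
  rw [inv_inv]
  exact (hlS z hz).symm

lemma pow (hg : HasWord S L g) (m : ℕ) : HasWord S (m * L) (g ^ m) := by
  induction m with
  | zero => simpa using one
  | succ m ih => simpa only [pow_succ, Nat.succ_mul] using ih.mul hg

lemma zpow (hg : HasWord S L g) (c : ℤ) : HasWord S (c.natAbs * L) (g ^ c) := by
  rcases c.eq_nat_or_neg with ⟨m, rfl | rfl⟩
  · simpa using hg.pow m
  · simpa using (hg.pow m).inv

lemma conj (hg : HasWord S L g) (hx : HasWord S L' x) : HasWord S (L' + 2 * L) (g * x * g⁻¹) :=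
  ((hg.mul hx).mul hg.inv).mono (by omega)

/-- Horner's scheme: consecutive conjugators `g ^ k` and `g ^ (k + 1)` cancel up to one `g`, so the
word length is linear and not quadratic in `m`. -/
lemma prod_pow_conj {x : ℕ → G} (hg : HasWord S L g) (hx : ∀ k, HasWord S L' (x k)) (m : ℕ) :
    HasWord S (m * (L' + 2 * L))
      ((List.range m).map fun k => g ^ k * x k * (g ^ k)⁻¹).prod := by
  induction m generalizing x with
  | zero => simpa using one
  | succ m ih =>
    have key : ((List.range (m + 1)).map fun k => g ^ k * x k * (g ^ k)⁻¹).prod =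
        x 0 * (g * ((List.range m).map fun k => g ^ k * x (k + 1) * (g ^ k)⁻¹).prod * g⁻¹) := by
      rw [← MulAut.conj_apply g, map_list_prod, List.range_succ_eq_map]
      simp [Function.comp_def, pow_succ', mul_assoc]
    rw [key]
    exact ((hx 0).mul (hg.conj (ih fun k => hx (k + 1)))).mono (by grind)

lemma map {T : Set H} (θ : G →* H) (hθ : ∀ s ∈ S, θ s ∈ T ∨ (θ s)⁻¹ ∈ T) (hg : HasWord S L g) :
    HasWord T L (θ g) := by
  obtain ⟨l, hl, hlS, rfl⟩ := hg
  refine ⟨l.map θ, by simpa, fun y hy => ?_, (map_list_prod θ l).symm⟩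
  obtain ⟨z, hz, rfl⟩ := List.mem_map.1 hy
  rcases hlS z hz with h | h
  · exact hθ z h
  · simpa [or_comm] using hθ _ h

end HasWord

end Words

section Transvections

variable {ι R : Type*} [Fintype ι] [DecidableEq ι] [CommRing R]
  {x y g : Matrix.SpecialLinearGroup ι R} {p q u v w : ι → R}

/-- `x` is the transvection `1 + p v`, where `p` is a column vector, `v` is a row vector and
`v p = 0`. -/
structure IsTransvection (x : Matrix.SpecialLinearGroup ι R) (p v : ι → R) : Prop where
  coe_eq : x.1 = 1 + vecMulVec p v
  dotProduct_eq_zero : v ⬝ᵥ p = 0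

lemma coe_mul_coe_inv (g : Matrix.SpecialLinearGroup ι R) : g.1 * (g⁻¹).1 = 1 := by
  rw [← coe_mul, mul_inv_cancel, coe_one]

lemma coe_inv_mul_coe (g : Matrix.SpecialLinearGroup ι R) : (g⁻¹).1 * g.1 = 1 := by
  rw [← coe_mul, inv_mul_cancel, coe_one]

lemma vecMul_inv_eq_iff : u ᵥ* (g⁻¹).1 = v ↔ u = v ᵥ* g.1 := by
  constructor
  · rintro rfl
    rw [vecMul_vecMul, coe_inv_mul_coe, vecMul_one]
  · rintro rfl
    rw [vecMul_vecMul, coe_mul_coe_inv, vecMul_one]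

namespace IsTransvection

lemma unique (hx : IsTransvection x p v) (hy : IsTransvection y p v) : x = y :=
  Subtype.ext (hx.coe_eq.trans hy.coe_eq.symm)

lemma smul_eq (hx : IsTransvection x p v) (q : ι → R) : x • q = q + (v ⬝ᵥ q) • p := by
  rw [Matrix.SpecialLinearGroup.smul_def, hx.coe_eq]
  change (1 + vecMulVec p v) *ᵥ q = _
  rw [add_mulVec, one_mulVec, vecMulVec_mulVec, op_smul_eq_smul]

lemma vecMul_eq (hx : IsTransvection x p v) (w : ι → R) : w ᵥ* x.1 = w + (w ⬝ᵥ p) • v := by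
  rw [hx.coe_eq, vecMul_add, vecMul_one, vecMul_vecMulVec]

lemma one_right (p : ι → R) : IsTransvection 1 p 0 := ⟨by simp, by simp⟩

lemma mul_right (hx : IsTransvection x p v) (hy : IsTransvection y p w) :
    IsTransvection (x * y) p (v + w) := by
  refine ⟨?_, by rw [add_dotProduct, hx.2, hy.2, add_zero]⟩
  rw [coe_mul, hx.coe_eq, hy.coe_eq, add_mul, mul_add, mul_add,
    vecMulVec_mul_vecMulVec, hx.2, zero_smul, vecMulVec_zero, vecMulVec_add]
  simp only [one_mul, mul_one, add_zero]
  abel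

lemma neg_right (hx : IsTransvection x p v) : IsTransvection x⁻¹ p (-v) := by
  refine ⟨?_, by rw [neg_dotProduct, hx.2, neg_zero]⟩
  have h : x.1 * (1 + vecMulVec p (-v)) = 1 := by
    rw [hx.coe_eq, add_mul, mul_add, mul_add, vecMulVec_mul_vecMulVec, hx.2, zero_smul,
      vecMulVec_zero, vecMulVec_neg]
    simp
  calc (x⁻¹).1 = (x⁻¹).1 * (x.1 * (1 + vecMulVec p (-v))) := by rw [h, mul_one]
    _ = 1 + vecMulVec p (-v) := by rw [← mul_assoc, coe_inv_mul_coe, one_mul]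

lemma pow (hx : IsTransvection x p v) (m : ℕ) : IsTransvection (x ^ m) p (m • v) := by
  induction m with
  | zero => simpa using one_right p
  | succ m ih => simpa only [pow_succ, succ_nsmul] using ih.mul_right hx

lemma zpow (hx : IsTransvection x p v) (c : ℤ) : IsTransvection (x ^ c) p (c • v) := by
  rcases c.eq_nat_or_neg with ⟨m, rfl | rfl⟩
  · simpa using hx.pow m
  · simpa using (hx.pow m).neg_right

lemma conj (hx : IsTransvection x p v) (g : Matrix.SpecialLinearGroup ι R) :
    IsTransvection (g * x * g⁻¹) (g • p) (v ᵥ* (g⁻¹).1) := by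
  refine ⟨?_, ?_⟩
  · rw [coe_mul, coe_mul, hx.coe_eq, mul_add, mul_one, add_mul, coe_mul_coe_inv, mul_vecMulVec,
      vecMulVec_mul]
    rfl
  · change _ ⬝ᵥ g.1 *ᵥ p = 0
    rw [dotProduct_mulVec, vecMul_vecMul, coe_inv_mul_coe, vecMul_one, hx.2]

end IsTransvection

/-- Some transvection `1 + p v` is a product of at most `L` elements of `S` and their inverses. -/
def HasTransvectionWord (S : Set (Matrix.SpecialLinearGroup ι R)) (L : ℕ) (p v : ι → R) : Prop :=
  ∃ x, HasWord S L x ∧ IsTransvection x p v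

namespace HasTransvectionWord

variable {S : Set (Matrix.SpecialLinearGroup ι R)} {L L' : ℕ}

lemma mono (h : HasTransvectionWord S L p v) (hL : L ≤ L') : HasTransvectionWord S L' p v :=
  let ⟨x, hxL, hx⟩ := h
  ⟨x, hxL.mono hL, hx⟩

lemma add_right (hv : HasTransvectionWord S L p v) (hw : HasTransvectionWord S L' p w) :
    HasTransvectionWord S (L + L') p (v + w) :=
  let ⟨x, hxL, hx⟩ := hv
  let ⟨y, hyL, hy⟩ := hw
  ⟨x * y, hxL.mul hyL, hx.mul_right hy⟩

lemma conj (h : HasTransvectionWord S L' p v) (hg : HasWord S L g) :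
    HasTransvectionWord S (L' + 2 * L) (g • p) (v ᵥ* (g⁻¹).1) :=
  let ⟨x, hxL, hx⟩ := h
  ⟨g * x * g⁻¹, hg.conj hxL, hx.conj g⟩

lemma conj_transvection (hu : HasTransvectionWord S L p u) (hv : HasTransvectionWord S L' q v)
    (hvp : v ⬝ᵥ p = 0) : HasTransvectionWord S (L + 2 * L') p (u + (u ⬝ᵥ q) • v) := by
  obtain ⟨y, hyL, hy⟩ := hv
  have hp : y⁻¹ • p = p := by rw [inv_smul_eq_iff, hy.smul_eq, hvp, zero_smul, add_zero]
  simpa only [hp, inv_inv, hy.vecMul_eq] using hu.conj hyL.inv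

end HasTransvectionWord

lemma vecMul_pow_eq_self (h : v ᵥ* g.1 = v) (m : ℕ) : v ᵥ* (g ^ m).1 = v := by
  induction m with
  | zero => simp
  | succ m ih => rw [pow_succ, coe_mul, ← vecMul_vecMul, ih, h]

lemma dotProduct_smul_eq (h : v ᵥ* g.1 = v) (p : ι → R) : v ⬝ᵥ g • p = v ⬝ᵥ p := by
  change v ⬝ᵥ g.1 *ᵥ p = v ⬝ᵥ p
  rw [dotProduct_mulVec, h]

lemma coe_prod_pow_conj {x : ℕ → Matrix.SpecialLinearGroup ι R} {v : ℕ → ι → R}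
    (hx : ∀ k, IsTransvection (x k) p (v k)) (hv : ∀ k, v k ᵥ* g.1 = v k) (m : ℕ) :
    ((List.range m).map fun k => g ^ k * x k * (g ^ k)⁻¹).prod.1 =
      1 + ∑ k ∈ Finset.range m, vecMulVec (g ^ k • p) (v k) := by
  induction m with
  | zero => simp
  | succ m ih =>
    have hlast : (g ^ m * x m * (g ^ m)⁻¹).1 = 1 + vecMulVec (g ^ m • p) (v m) := by
      rw [((hx m).conj (g ^ m)).coe_eq, vecMul_inv_eq_iff.2 (vecMul_pow_eq_self (hv m) m).symm]
    have hcross : (∑ k ∈ Finset.range m, vecMulVec (g ^ k • p) (v k)) *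
        vecMulVec (g ^ m • p) (v m) = 0 := by
      rw [Finset.sum_mul]
      refine Finset.sum_eq_zero fun k _ => ?_
      rw [vecMulVec_mul_vecMulVec, dotProduct_smul_eq (vecMul_pow_eq_self (hv k) m),
        (hx k).dotProduct_eq_zero, zero_smul, vecMulVec_zero]
    rw [List.range_succ, List.map_append, List.prod_append, List.map_singleton,
      List.prod_singleton, coe_mul, ih, hlast, mul_add, mul_one, add_mul, one_mul, hcross,
      add_zero, Finset.sum_range_succ, add_assoc]

lemma IsTransvection.mul_smul_add_mul_inv_smul (hx : IsTransvection x p v)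
    (hy : IsTransvection y q w) (hvq : v ⬝ᵥ q = 1) (hwp : w ⬝ᵥ p = 1) :
    (x * y) • p + (x * y)⁻¹ • p = (3 : ℤ) • p := by
  have hxp : x⁻¹ • p = p := by
    rw [hx.neg_right.smul_eq, neg_dotProduct, hx.2, neg_zero, zero_smul, add_zero]
  rw [_root_.mul_inv_rev, mul_smul, mul_smul, hxp, hy.smul_eq, hy.neg_right.smul_eq,
    neg_dotProduct, hwp, smul_add, one_smul, hx.smul_eq, hx.smul_eq, hx.2, hvq]
  module

end Transvections

section Lucas

/-- The Lucas numbers of even index, `L_{2k} = φ ^ (2k) + φ ^ (-2k)`. -/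
def evenLucas : ℕ → ℤ
  | 0 => 2
  | 1 => 3
  | k + 2 => 3 * evenLucas (k + 1) - evenLucas k

lemma evenLucas_pos_and_le_succ (k : ℕ) :
    0 < evenLucas k ∧ evenLucas k ≤ evenLucas (k + 1) := by
  induction k with
  | zero => decide
  | succ k ih =>
    rw [evenLucas]
    omega

lemma evenLucas_succ_le (k : ℕ) : evenLucas (k + 1) ≤ 3 * evenLucas k := by
  cases k with
  | zero => decide
  | succ k =>
    have := (evenLucas_pos_and_le_succ k).1
    rw [evenLucas]
    omega

lemma two_pow_le_evenLucas (k : ℕ) : 2 ^ k ≤ evenLucas k := by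
  match k with
  | 0 | 1 => decide
  | k + 2 =>
    have := two_pow_le_evenLucas (k + 1)
    have := (evenLucas_pos_and_le_succ k).2
    rw [evenLucas, pow_succ]
    omega

lemma pow_smul_add_inv_pow_smul {G M : Type*} [Group G] [AddCommGroup M] [DistribMulAction G M]
    {g : G} {p : M} (hg : g • p + g⁻¹ • p = (3 : ℤ) • p) (k : ℕ) :
    g ^ k • p + (g⁻¹) ^ k • p = evenLucas k • p := by
  match k with
  | 0 => simp [evenLucas, two_smul]
  | 1 => simpa [evenLucas] using hg
  | k + 2 =>
    calc g ^ (k + 2) • p + g⁻¹ ^ (k + 2) • p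
        = g ^ (k + 1) • (g • p + g⁻¹ • p) + g⁻¹ ^ (k + 1) • (g • p + g⁻¹ • p) -
            (g ^ k • p + g⁻¹ ^ k • p) := by
          have h₁ : g ^ (k + 1) • g⁻¹ • p = g ^ k • p := by
            rw [pow_succ, mul_smul, smul_inv_smul]
          have h₂ : g⁻¹ ^ (k + 1) • g • p = g⁻¹ ^ k • p := by
            rw [pow_succ, mul_smul, inv_smul_smul]
          rw [smul_add, smul_add, h₁, h₂, ← mul_smul, ← mul_smul, ← pow_succ, ← pow_succ]
          abel
      _ = (3 : ℤ) • (g ^ (k + 1) • p + g⁻¹ ^ (k + 1) • p) - (g ^ k • p + g⁻¹ ^ k • p) := by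
          rw [hg, smul_comm _ (3 : ℤ), smul_comm _ (3 : ℤ), smul_add]
      _ = evenLucas (k + 2) • p := by
          rw [pow_smul_add_inv_pow_smul hg (k + 1), pow_smul_add_inv_pow_smul hg k, evenLucas,
            sub_smul, mul_smul]

lemma exists_balanced_digits {w : ℕ → ℤ} (h₀ : w 0 ≤ 3) (hw : ∀ k, w (k + 1) ≤ 3 * w k) (m : ℕ)
    {a : ℤ} (ha : 2 * |a| ≤ w m) :
    ∃ (r : ℤ) (d : ℕ → ℤ), |r| ≤ 1 ∧ (∀ k, |d k| ≤ 1) ∧ (a = 0 → r = 0 ∧ d = 0) ∧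
      a = r + ∑ k ∈ Finset.range m, w k * d k := by
  induction m generalizing a with
  | zero => exact ⟨a, 0, by omega, by simp, by simp, by simp⟩
  | succ m ih =>
    have hm := hw m
    obtain ⟨e, he, he₀, hae⟩ : ∃ e : ℤ, |e| ≤ 1 ∧ (a = 0 → e = 0) ∧ 2 * |a - w m * e| ≤ w m := by
      rcases lt_trichotomy 0 a with h | h | h
      · by_cases 2 * a ≤ w m
        · exact ⟨0, by simp, by simp, by grind⟩
        · exact ⟨1, by simp, by grind, by grind⟩
      · exact ⟨0, by simp, by simp, by grind⟩
      · by_cases -w m ≤ 2 * a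
        · exact ⟨0, by simp, by simp, by grind⟩
        · exact ⟨-1, by simp, by grind, by grind⟩
    obtain ⟨r, d, hr, hd, hzero, h⟩ := ih hae
    refine ⟨r, Function.update d m e, hr, fun k => ?_, fun ha₀ => ?_, ?_⟩
    · rcases eq_or_ne k m with rfl | hk
      · simpa using he
      · simpa [hk] using hd k
    · obtain ⟨rfl, rfl⟩ := hzero (by simp [ha₀, he₀ ha₀])
      simp [he₀ ha₀]
    · rw [Finset.sum_range_succ, Finset.sum_congr rfl fun k hk => by
        rw [Function.update_of_ne (Finset.mem_range.1 hk).ne], Function.update_self]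
      linarith

lemma exists_balanced_digit_vectors {ι : Type*} {w : ℕ → ℤ} (h₀ : w 0 ≤ 3)
    (hw : ∀ k, w (k + 1) ≤ 3 * w k) (m : ℕ) {v : ι → ℤ} (hv : ∀ i, 2 * |v i| ≤ w m) :
    ∃ (r : ι → ℤ) (d : ℕ → ι → ℤ), (∀ i, |r i| ≤ 1) ∧ (∀ k i, |d k i| ≤ 1) ∧
      (∀ i, v i = 0 → r i = 0 ∧ ∀ k, d k i = 0) ∧
      v = r + ∑ k ∈ Finset.range m, w k • d k := by
  choose r d hr hd hrd h using fun i => exists_balanced_digits h₀ hw m (hv i)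
  refine ⟨r, fun k i => d i k, hr, fun k i => hd i k, fun i hi => ?_, ?_⟩
  · exact ⟨(hrd i hi).1, congrFun (hrd i hi).2⟩
  · ext i
    simpa using h i

end Lucas

section Hyperbolic

variable {ι R : Type*} [Fintype ι] [DecidableEq ι] [CommRing R]
  {S : Set (Matrix.SpecialLinearGroup ι R)} {L L' : ℕ} {g : Matrix.SpecialLinearGroup ι R}
  {p : ι → R}

/-- The conjugates of `1 + p (d k)` by `g ^ k` and by `g ^ (-k)` multiply to
`1 + (g ^ k p + g ^ (-k) p) (d k) = 1 + p (L_{2k} d k)`. -/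
lemma HasTransvectionWord.sum_evenLucas_smul {d : ℕ → ι → R} (hg : HasWord S L g)
    (hgp : g • p + g⁻¹ • p = (3 : ℤ) • p) (hd : ∀ k, HasTransvectionWord S L' p (d k))
    (hdg : ∀ k, d k ᵥ* g.1 = d k) (m : ℕ) :
    HasTransvectionWord S (2 * (m * (L' + 2 * L))) p
      (∑ k ∈ Finset.range m, evenLucas k • d k) := by
  choose x hxL hx using hd
  have hdg' : ∀ k, d k ᵥ* (g⁻¹).1 = d k := fun k => vecMul_inv_eq_iff.2 (hdg k).symm
  have hcross : (∑ k ∈ Finset.range m, vecMulVec (g ^ k • p) (d k)) *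
      ∑ k ∈ Finset.range m, vecMulVec (g⁻¹ ^ k • p) (d k) = 0 := by
    rw [Finset.sum_mul_sum]
    refine Finset.sum_eq_zero fun k _ => Finset.sum_eq_zero fun l _ => ?_
    rw [vecMulVec_mul_vecMulVec, dotProduct_smul_eq (vecMul_pow_eq_self (hdg' k) l),
      (hx k).dotProduct_eq_zero, zero_smul, vecMulVec_zero]
  refine ⟨_, ((hg.prod_pow_conj hxL m).mul (hg.inv.prod_pow_conj hxL m)).mono (by omega), ?_, ?_⟩
  · rw [coe_mul, coe_prod_pow_conj hx hdg, coe_prod_pow_conj hx hdg', mul_add, mul_one, add_mul,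
      one_mul, hcross, add_zero, add_assoc, ← Finset.sum_add_distrib]
    simp only [← add_vecMulVec, pow_smul_add_inv_pow_smul hgp, smul_vecMulVec, ← vecMulVec_smul]
    ext i j
    simp [vecMulVec_apply, Finset.mul_sum, Matrix.sum_apply]
  · rw [sum_dotProduct]
    exact Finset.sum_eq_zero fun k _ => by rw [smul_dotProduct, (hx k).2, smul_zero]

end Hyperbolic

section Generators

variable {n : ℕ} {A B : Matrix.SpecialLinearGroup (Fin n) ℤ} {u v : Fin n → ℤ} {j k : ℕ}

/-- The standard basis vector of `ℤⁿ` at position `k`, and `0` if `n ≤ k`. Indexing by `ℕ` avoids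
bound proofs, and `v ⬝ᵥ unitVec n k` is the `k`-th coordinate of `v`. -/
def unitVec (n k : ℕ) : Fin n → ℤ := fun i => if (i : ℕ) = k then 1 else 0

lemma unitVec_eq_single (h : k < n) : unitVec n k = Pi.single ⟨k, h⟩ 1 := by
  ext i
  simp [unitVec, Pi.single_apply, Fin.ext_iff]

lemma dotProduct_unitVec (v : Fin n → ℤ) (h : k < n) : v ⬝ᵥ unitVec n k = v ⟨k, h⟩ := by
  rw [unitVec_eq_single h, dotProduct_single_one]

lemma unitVec_dotProduct_self (h : k < n) : unitVec n k ⬝ᵥ unitVec n k = 1 := by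
  rw [dotProduct_unitVec _ h]
  simp [unitVec]

lemma unitVec_dotProduct_of_ne (h : j ≠ k) : unitVec n j ⬝ᵥ unitVec n k = 0 :=
  Finset.sum_eq_zero fun i _ => by
    simp only [unitVec]
    split_ifs <;> omega

lemma abs_dotProduct_unitVec_le {c : ℤ} (hc : 0 ≤ c) (hv : ∀ i, |v i| ≤ c) (k : ℕ) :
    |v ⬝ᵥ unitVec n k| ≤ c := by
  by_cases h : k < n
  · rw [dotProduct_unitVec v h]
    exact hv _
  · have : unitVec n k = 0 := funext fun i => if_neg (by omega)
    simpa [this] using hc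

lemma sum_smul_unitVec_succ_apply (a : ℕ → ℤ) (m : ℕ) (i : Fin n) :
    (∑ k ∈ Finset.range m, a k • unitVec n (k + 1)) i =
      if 0 < (i : ℕ) ∧ (i : ℕ) ≤ m then a (i - 1) else 0 := by
  rw [Finset.sum_apply]
  rcases hi : (i : ℕ) with _ | j
  · simp [unitVec, hi]
  · simp [unitVec, hi]

lemma smul_unitVec_succ (hB : B.1 = Bmat n) (h : k + 1 < n) :
    B • unitVec n (k + 1) = unitVec n k := by
  change B.1 *ᵥ _ = _
  rw [hB, unitVec_eq_single h, mulVec_single_one]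
  ext i
  simp [Bmat, unitVec, eq_comm]

lemma smul_unitVec_zero (hB : B.1 = Bmat n) (hn : 2 ≤ n) :
    B • unitVec n 0 = (-1 : ℤ) ^ (n - 1) • unitVec n (n - 1) := by
  change B.1 *ᵥ _ = _
  rw [hB, unitVec_eq_single (by omega), mulVec_single_one]
  ext i
  simp [Bmat, unitVec]

lemma unitVec_vecMul (hB : B.1 = Bmat n) (h : k + 1 < n) :
    unitVec n k ᵥ* B.1 = unitVec n (k + 1) := by
  rw [hB, unitVec_eq_single (by omega), single_one_vecMul]
  ext i
  simp only [row_apply, Bmat, of_apply, unitVec]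
  split_ifs <;> first | rfl | omega

lemma pow_smul_unitVec (hB : B.1 = Bmat n) (h : j + k < n) :
    B ^ k • unitVec n (j + k) = unitVec n j := by
  induction k with
  | zero => rw [pow_zero, one_smul, add_zero]
  | succ k ih =>
    rw [← add_assoc] at h
    rw [pow_succ, mul_smul, ← add_assoc, smul_unitVec_succ hB h, ih (by omega)]

lemma unitVec_vecMul_pow (hB : B.1 = Bmat n) (h : j + k < n) :
    unitVec n j ᵥ* (B ^ k).1 = unitVec n (j + k) := by
  induction k with
  | zero => simp
  | succ k ih =>
    rw [← add_assoc] at h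
    rw [pow_succ, coe_mul, ← vecMul_vecMul, ih (by omega), unitVec_vecMul hB h, add_assoc]

lemma abs_le_of_abs_vecMul_le (hB : B.1 = Bmat n) (hn : 2 ≤ n) {c : ℤ}
    (hu : ∀ i, |(u ᵥ* B.1) i| ≤ c) (i : Fin n) : |u i| ≤ c := by
  have hcoord : ∀ {k} (hk : k < n), (u ᵥ* B.1) ⟨k, hk⟩ = u ⬝ᵥ B • unitVec n k := fun hk => by
    rw [← dotProduct_unitVec (u ᵥ* B.1) hk, ← dotProduct_mulVec]
    rfl
  by_cases hi : (i : ℕ) + 1 < n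
  · have h := hu ⟨i + 1, hi⟩
    rwa [hcoord, smul_unitVec_succ hB hi, dotProduct_unitVec _ i.2] at h
  · have h := hu ⟨0, by omega⟩
    rw [hcoord, smul_unitVec_zero hB hn, dotProduct_smul, smul_eq_mul, abs_mul, abs_pow, abs_neg,
      abs_one, one_pow, one_mul, dotProduct_unitVec _ (by omega)] at h
    rwa [show i = ⟨n - 1, by omega⟩ from Fin.ext (by simp only; omega)]

lemma abs_le_of_abs_vecMul_pow_le (hB : B.1 = Bmat n) (hn : 2 ≤ n) {c : ℤ}
    (hu : ∀ i, |(u ᵥ* (B ^ k).1) i| ≤ c) (i : Fin n) : |u i| ≤ c := by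
  induction k generalizing u i with
  | zero => simpa using hu i
  | succ k ih =>
    rw [pow_succ', coe_mul, ← vecMul_vecMul] at hu
    exact abs_le_of_abs_vecMul_le hB hn (fun i => ih hu i) i

lemma isTransvection_Amat (hA : A.1 = Amat n) : IsTransvection A (unitVec n 0) (unitVec n 1) := by
  refine ⟨?_, unitVec_dotProduct_of_ne one_ne_zero⟩
  rw [hA]
  ext i j
  simp only [Amat, of_apply, Matrix.add_apply, Matrix.one_apply, vecMulVec_apply, unitVec,
    Fin.ext_iff]
  split_ifs <;> first | rfl | omega

lemma isTransvection_inv_pow_conj (hA : A.1 = Amat n) (hB : B.1 = Bmat n) (h : k + 1 < n)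
    (c : ℤ) :
    IsTransvection (B⁻¹ ^ k * A ^ c * (B⁻¹ ^ k)⁻¹) (unitVec n k) (c • unitVec n (k + 1)) := by
  have hp : B⁻¹ ^ k • unitVec n 0 = unitVec n k := by
    rw [inv_pow, inv_smul_eq_iff]
    simpa using (pow_smul_unitVec (j := 0) hB (by omega)).symm
  have hv : (c • unitVec n 1) ᵥ* ((B⁻¹ ^ k)⁻¹).1 = c • unitVec n (k + 1) := by
    rw [inv_pow, inv_inv, smul_vecMul, unitVec_vecMul_pow hB (by omega), add_comm]
  have h := ((isTransvection_Amat hA).zpow c).conj (B⁻¹ ^ k)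
  rwa [hp, hv] at h

end Generators

section Sweep

variable {n : ℕ} {A B : Matrix.SpecialLinearGroup (Fin n) ℤ} {d : Fin n → ℤ} {c : ℕ → ℤ} {m : ℕ}

/-- The product of the conjugates `B⁻ᵏ A ^ (c k) Bᵏ` for `k < m`. For the matrices `A_n` and `B_n`
it is the product of the elementary matrices with entries `c k` at `(k, k + 1)`. -/
def sweep {G : Type*} [Group G] (A B : G) (c : ℕ → ℤ) (m : ℕ) : G :=
  ((List.range m).map fun k => B⁻¹ ^ k * A ^ c k * (B⁻¹ ^ k)⁻¹).prod

lemma sweep_succ {G : Type*} [Group G] (A B : G) (c : ℕ → ℤ) (m : ℕ) :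
    sweep A B c (m + 1) = sweep A B c m * (B⁻¹ ^ m * A ^ c m * (B⁻¹ ^ m)⁻¹) := by
  simp [sweep, List.range_succ]

lemma hasWord_sweep {G : Type*} [Group G] {A B : G} {b : ℕ} (hc : ∀ k, |c k| ≤ b) (m : ℕ) :
    HasWord {A, B} (m * (b + 2)) (sweep A B c m) := by
  have hA : ∀ k, HasWord {A, B} b (A ^ c k) := fun k =>
    ((HasWord.of_mem (by simp)).zpow (c k)).mono (by grind)
  exact (HasWord.of_mem (by simp)).inv.prod_pow_conj hA m

lemma sweep_smul_unitVec_zero (hA : A.1 = Amat n) (hB : B.1 = Bmat n) (hm : m < n) :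
    sweep A B c m • unitVec n 0 = unitVec n 0 := by
  induction m with
  | zero => simp [sweep]
  | succ m ih =>
    rw [sweep_succ, mul_smul, (isTransvection_inv_pow_conj hA hB hm _).smul_eq, smul_dotProduct,
      unitVec_dotProduct_of_ne (by omega), smul_zero, zero_smul, add_zero, ih (by omega)]

lemma vecMul_inv_sweep (hA : A.1 = Amat n) (hB : B.1 = Bmat n) (hm : m < n) (u : Fin n → ℤ) :
    u ᵥ* ((sweep A B c m)⁻¹).1 =
      u - ∑ k ∈ Finset.range m, (c k * u ⬝ᵥ unitVec n k) • unitVec n (k + 1) := by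
  induction m generalizing u with
  | zero => simp [sweep]
  | succ m ih =>
    have hcoord : ∀ k ∈ Finset.range m,
        (u + (u ⬝ᵥ unitVec n m) • -(c m • unitVec n (m + 1))) ⬝ᵥ unitVec n k =
          u ⬝ᵥ unitVec n k := fun k hk => by
      have := Finset.mem_range.1 hk
      rw [add_dotProduct, smul_dotProduct, neg_dotProduct, smul_dotProduct,
        unitVec_dotProduct_of_ne (by omega)]
      simp
    rw [sweep_succ, _root_.mul_inv_rev, coe_mul, ← vecMul_vecMul,
      (isTransvection_inv_pow_conj hA hB hm _).neg_right.vecMul_eq, ih (by omega),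
      Finset.sum_congr rfl fun k hk => by rw [hcoord k hk], Finset.sum_range_succ]
    module

lemma vecMul_inv_sweep_apply (hA : A.1 = Amat n) (hB : B.1 = Bmat n) (c : ℕ → ℤ) (i : Fin n) :
    ((fun j : Fin n => if (j : ℕ) = 0 then 0 else 1) ᵥ* ((sweep A B c (n - 1))⁻¹).1) i =
      if (i : ℕ) = 0 then 0 else if (i : ℕ) = 1 then 1 else 1 - c (i - 1) := by
  have hi := i.2
  rw [vecMul_inv_sweep hA hB (by omega), Pi.sub_apply, sum_smul_unitVec_succ_apply]
  rw [dotProduct_unitVec _ (show (i : ℕ) - 1 < n by omega)]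
  grind

/-- Undoing the sweep with all exponents `1` takes the row vector `(0, 1, …, 1)` to `e₁`, and
undoing a sweep with exponents `1 - d i` takes it to `d`, up to the entry at position `1`. -/
lemma exists_vecMul_eq_add_smul (hA : A.1 = Amat n) (hB : B.1 = Bmat n) (hn : 2 ≤ n)
    (hd₀ : d ⬝ᵥ unitVec n 0 = 0) (hd : ∀ i, |d i| ≤ 1) :
    ∃ g, HasWord {A, B} (8 * (n - 1)) g ∧ g • unitVec n 0 = unitVec n 0 ∧
      unitVec n 1 ᵥ* (g⁻¹).1 = d + (1 - d ⬝ᵥ unitVec n 1) • unitVec n 1 := by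
  set c : ℕ → ℤ := fun k => 1 - d ⬝ᵥ unitVec n (k + 1) with hc
  set s : Fin n → ℤ := fun i => if (i : ℕ) = 0 then 0 else 1 with hs
  have hc_le : ∀ k, |c k| ≤ (2 : ℕ) := fun k => by
    have := abs_dotProduct_unitVec_le zero_le_one hd (k + 1)
    grind
  have h_ones : s ᵥ* ((sweep A B (fun _ => 1) (n - 1))⁻¹).1 = unitVec n 1 := by
    ext i
    rw [hs, vecMul_inv_sweep_apply hA hB]
    grind [unitVec]
  have h_digits : s ᵥ* ((sweep A B c (n - 1))⁻¹).1 =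
      d + (1 - d ⬝ᵥ unitVec n 1) • unitVec n 1 := by
    ext i
    have hdi := dotProduct_unitVec d i.2
    rw [hs, vecMul_inv_sweep_apply hA hB]
    simp only [hc, Pi.add_apply, Pi.smul_apply, unitVec, smul_eq_mul]
    grind
  refine ⟨sweep A B c (n - 1) * (sweep A B (fun _ => 1) (n - 1))⁻¹, ?_, ?_, ?_⟩
  · exact ((hasWord_sweep hc_le (n - 1)).mul
      (hasWord_sweep (b := 2) (by simp) (n - 1)).inv).mono (by omega)
  · rw [mul_smul, inv_smul_eq_iff.2 (sweep_smul_unitVec_zero hA hB (by omega)).symm,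
      sweep_smul_unitVec_zero hA hB (by omega)]
  · rw [_root_.mul_inv_rev, inv_inv, coe_mul, ← vecMul_vecMul, ← vecMul_inv_eq_iff.1 h_ones,
      h_digits]

lemma hasTransvectionWord_of_abs_le_one (hA : A.1 = Amat n) (hB : B.1 = Bmat n) (hn : 2 ≤ n)
    (hd₀ : d ⬝ᵥ unitVec n 0 = 0) (hd : ∀ i, |d i| ≤ 1) :
    HasTransvectionWord {A, B} (16 * n) (unitVec n 0) d := by
  obtain ⟨g, hgL, hg₀, hg₁⟩ := exists_vecMul_eq_add_smul hA hB hn hd₀ hd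
  have hA₁ : HasWord {A, B} 1 A := .of_mem (by simp)
  have hconj : HasTransvectionWord {A, B} (1 + 2 * (8 * (n - 1))) (unitVec n 0)
      (d + (1 - d ⬝ᵥ unitVec n 1) • unitVec n 1) := by
    have h := HasTransvectionWord.conj ⟨A, hA₁, isTransvection_Amat hA⟩ hgL
    rwa [hg₀, hg₁] at h
  have hpow : HasTransvectionWord {A, B} 2 (unitVec n 0)
      ((d ⬝ᵥ unitVec n 1 - 1) • unitVec n 1) := by
    refine ⟨_, (hA₁.zpow _).mono ?_, (isTransvection_Amat hA).zpow _⟩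
    have := abs_dotProduct_unitVec_le zero_le_one hd 1
    grind
  convert (hconj.add_right hpow).mono (L' := 16 * n) (by omega) using 1
  module

end Sweep

section Rows

variable {n m : ℕ} {A B : Matrix.SpecialLinearGroup (Fin n) ℤ} {v : Fin n → ℤ}

lemma exists_hyperbolic (hA : A.1 = Amat n) (hB : B.1 = Bmat n) (hn : 2 ≤ n) :
    ∃ g, HasWord {A, B} (16 * n + 3) g ∧
      g • unitVec n 0 + g⁻¹ • unitVec n 0 = (3 : ℤ) • unitVec n 0 ∧
      ∀ d, d ⬝ᵥ unitVec n 0 = 0 → d ⬝ᵥ unitVec n (n - 1) = 0 → d ᵥ* g.1 = d := by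
  set q := (-1 : ℤ) ^ (n - 1) • unitVec n (n - 1) with hq
  have hqq : q ⬝ᵥ q = 1 := by
    rw [hq, smul_dotProduct, dotProduct_smul, unitVec_dotProduct_self (by omega), smul_eq_mul,
      smul_eq_mul, mul_one, ← mul_pow, neg_mul_neg, one_mul, one_pow]
  obtain ⟨x, hxL, hx⟩ : HasTransvectionWord {A, B} (16 * n) (unitVec n 0) q := by
    refine hasTransvectionWord_of_abs_le_one hA hB hn ?_ fun i => ?_
    · rw [hq, smul_dotProduct, unitVec_dotProduct_of_ne (by omega), smul_zero]
    · rw [hq, Pi.smul_apply, smul_eq_mul, abs_mul, abs_pow, abs_neg, abs_one, one_pow, one_mul]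
      simp only [unitVec]
      split_ifs <;> simp
  obtain ⟨y, hyL, hy⟩ : HasTransvectionWord {A, B} 3 q (unitVec n 0) := by
    have h := HasTransvectionWord.conj (L := 1) (g := B)
      ⟨A, .of_mem (S := {A, B}) (by simp), isTransvection_Amat hA⟩ (.of_mem (by simp))
    rwa [smul_unitVec_zero hB hn,
      vecMul_inv_eq_iff.2 (unitVec_vecMul (k := 0) hB (by omega)).symm] at h
  refine ⟨x * y, hxL.mul hyL, hx.mul_smul_add_mul_inv_smul hy hqq
    (unitVec_dotProduct_self (by omega)), fun d hd₀ hd₁ => ?_⟩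
  rw [coe_mul, ← vecMul_vecMul, hx.vecMul_eq, hd₀, zero_smul, add_zero, hy.vecMul_eq, hq,
    dotProduct_smul, hd₁, smul_zero, zero_smul, add_zero]

lemma hasTransvectionWord_of_last_eq_zero (hA : A.1 = Amat n) (hB : B.1 = Bmat n) (hn : 3 ≤ n)
    (hv₀ : v ⬝ᵥ unitVec n 0 = 0) (hv₁ : v ⬝ᵥ unitVec n (n - 1) = 0)
    (hv : ∀ i, 2 * |v i| ≤ evenLucas m) :
    HasTransvectionWord {A, B} (100 * n * m + 16 * n) (unitVec n 0) v := by
  obtain ⟨g, hgL, hg, hfix⟩ := exists_hyperbolic hA hB (by omega)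
  obtain ⟨r, d, hr, hd, hzero, rfl⟩ :=
    exists_balanced_digit_vectors (by decide) evenLucas_succ_le m hv
  have hcoord : ∀ {k}, k < n → (r + ∑ k ∈ Finset.range m, evenLucas k • d k) ⬝ᵥ unitVec n k = 0 →
      r ⬝ᵥ unitVec n k = 0 ∧ ∀ l, d l ⬝ᵥ unitVec n k = 0 := fun hk h => by
    simp only [dotProduct_unitVec _ hk] at h ⊢
    exact hzero _ h
  obtain ⟨hr₀, hd₀⟩ := hcoord (by omega) hv₀
  obtain ⟨-, hd₁⟩ := hcoord (by omega) hv₁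
  have hsum := HasTransvectionWord.sum_evenLucas_smul hgL hg
    (fun k => hasTransvectionWord_of_abs_le_one hA hB (by omega) (hd₀ k) (hd k))
    (fun k => hfix _ (hd₀ k) (hd₁ k)) m
  refine ((hasTransvectionWord_of_abs_le_one hA hB (by omega) hr₀ hr).add_right hsum).mono ?_
  nlinarith

lemma hasTransvectionWord_unitVec_one_last (hA : A.1 = Amat n) (hB : B.1 = Bmat n) (hn : 3 ≤ n) :
    HasTransvectionWord {A, B} (16 * n + 2) (unitVec n 1) (unitVec n (n - 1)) := by
  have h := (hasTransvectionWord_of_abs_le_one (d := unitVec n (n - 2)) hA hB (by omega)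
    (unitVec_dotProduct_of_ne (by omega)) fun i => by
      simp only [unitVec]
      split_ifs <;> simp).conj (L := 1) (g := B⁻¹) (HasWord.of_mem (by simp)).inv
  have hp : B⁻¹ • unitVec n 0 = unitVec n 1 := by
    rw [inv_smul_eq_iff, smul_unitVec_succ hB (by omega)]
  have hv : unitVec n (n - 2) ᵥ* ((B⁻¹)⁻¹).1 = unitVec n (n - 1) := by
    rw [inv_inv, unitVec_vecMul hB (by omega), show n - 2 + 1 = n - 1 by omega]
  rwa [hp, hv] at h

/-- The last coordinate `a` of `v` is produced by conjugating `1 + a e₀ e₁` by `1 + e₁ eₙ₋₁`. -/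
lemma hasTransvectionWord_unitVec_zero (hA : A.1 = Amat n) (hB : B.1 = Bmat n) (hn : 3 ≤ n)
    (hv₀ : v ⬝ᵥ unitVec n 0 = 0) (hv : ∀ i, 4 * |v i| ≤ evenLucas m) :
    HasTransvectionWord {A, B} (200 * n * m + 66 * n) (unitVec n 0) v := by
  set a := v ⬝ᵥ unitVec n (n - 1) with ha
  set w := v - a • (unitVec n 1 + unitVec n (n - 1)) with hw
  have ha_le : 4 * |a| ≤ evenLucas m := by
    rw [ha, dotProduct_unitVec v (by omega)]
    exact hv _
  have h_single : HasTransvectionWord {A, B} (100 * n * m + 16 * n) (unitVec n 0)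
      (a • unitVec n 1) := by
    refine hasTransvectionWord_of_last_eq_zero hA hB hn ?_ ?_ fun i => ?_
    · rw [smul_dotProduct, unitVec_dotProduct_of_ne one_ne_zero, smul_zero]
    · rw [smul_dotProduct, unitVec_dotProduct_of_ne (by omega), smul_zero]
    · simp only [Pi.smul_apply, unitVec, smul_eq_mul]
      grind
  have h_pair : HasTransvectionWord {A, B} (100 * n * m + 16 * n + 2 * (16 * n + 2)) (unitVec n 0)
      (a • (unitVec n 1 + unitVec n (n - 1))) := by
    convert h_single.conj_transvection (hasTransvectionWord_unitVec_one_last hA hB hn)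
      (unitVec_dotProduct_of_ne (by omega)) using 1
    rw [smul_dotProduct, unitVec_dotProduct_self (by omega), smul_add, smul_eq_mul, mul_one]
  have h_rest : HasTransvectionWord {A, B} (100 * n * m + 16 * n) (unitVec n 0) w := by
    refine hasTransvectionWord_of_last_eq_zero hA hB hn ?_ ?_ fun i => ?_
    · rw [hw, sub_dotProduct, hv₀, smul_dotProduct, add_dotProduct,
        unitVec_dotProduct_of_ne one_ne_zero, unitVec_dotProduct_of_ne (by omega)]
      simp
    · rw [hw, sub_dotProduct, ← ha, smul_dotProduct, add_dotProduct,
        unitVec_dotProduct_of_ne (by omega), unitVec_dotProduct_self (by omega)]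
      simp
    · have := hv i
      simp only [hw, Pi.sub_apply, Pi.smul_apply, Pi.add_apply, unitVec, smul_eq_mul]
      grind
  convert (h_rest.add_right h_pair).mono (L' := 200 * n * m + 66 * n) (by nlinarith) using 1
  rw [hw, sub_add_cancel]

lemma hasTransvectionWord_unitVec (hA : A.1 = Amat n) (hB : B.1 = Bmat n) (hn : 3 ≤ n) {r : ℕ}
    (hr : r < n) (hv₀ : v ⬝ᵥ unitVec n r = 0) (hv : ∀ i, 4 * |v i| ≤ evenLucas m) :
    HasTransvectionWord {A, B} (200 * n * m + 68 * n) (unitVec n r) v := by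
  have hvB : v = (v ᵥ* ((B ^ r)⁻¹).1) ᵥ* (B ^ r).1 := vecMul_inv_eq_iff.1 rfl
  have hp : B ^ r • unitVec n r = unitVec n 0 := by
    simpa using pow_smul_unitVec (j := 0) hB (by omega)
  have hBr : HasWord {A, B} (r * 1) ((B ^ r)⁻¹) := ((HasWord.of_mem (by simp)).pow r).inv
  have hfirst := hasTransvectionWord_unitVec_zero (v := v ᵥ* ((B ^ r)⁻¹).1) (m := m) hA hB hn ?_ ?_
  · have h := hfirst.conj hBr
    rw [inv_smul_eq_iff.2 hp.symm, inv_inv, ← hvB] at h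
    exact h.mono (by omega)
  · rw [← hp]
    change _ ⬝ᵥ (B ^ r).1 *ᵥ _ = 0
    rw [dotProduct_mulVec, ← hvB, hv₀]
  · have hle : ∀ i, |(v ᵥ* ((B ^ r)⁻¹).1) i| ≤ evenLucas m / 4 :=
      abs_le_of_abs_vecMul_pow_le (k := r) hB (by omega) fun i => by
        rw [← hvB]
        have := hv i
        omega
    intro i
    have := hle i
    omega

lemma IsRowMatrix.exists_isTransvection {x : Matrix.SpecialLinearGroup (Fin n) ℤ}
    (hx : IsRowMatrix x.1) :
    ∃ (r : Fin n) (v : Fin n → ℤ), IsTransvection x (unitVec n r) v ∧ ∀ j, |v j| ≤ |x.1 r j| := by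
  obtain ⟨hdiag, r, hr⟩ := hx
  refine ⟨r, fun j => if j = r then 0 else x.1 r j, ⟨?_, ?_⟩, fun j => ?_⟩
  · ext i j
    rw [Matrix.add_apply, Matrix.one_apply, vecMulVec_apply]
    rcases eq_or_ne i r with rfl | hi
    · rcases eq_or_ne j i with rfl | hj
      · simp [hdiag]
      · simp [unitVec, hj, hj.symm]
    · rcases eq_or_ne i j with rfl | hij
      · simp [unitVec, hdiag, hi, Fin.val_inj]
      · simp [unitVec, hi, hij, hr i j hi hij, Fin.val_inj]
  · rw [dotProduct_unitVec _ r.2]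
    exact if_pos rfl
  · dsimp only
    split_ifs <;> simp

lemma IsRowMatrix.hasWord (hA : A.1 = Amat n) (hB : B.1 = Bmat n) (hn : 3 ≤ n)
    {x : Matrix.SpecialLinearGroup (Fin n) ℤ} (hx : IsRowMatrix x.1)
    (hent : ∀ i j, 4 * |x.1 i j| ≤ evenLucas m) : HasWord {A, B} (200 * n * m + 68 * n) x := by
  obtain ⟨r, v, hxv, hv⟩ := hx.exists_isTransvection
  obtain ⟨y, hyL, hy⟩ := hasTransvectionWord_unitVec (v := v) (m := m) hA hB hn r.2
    hxv.dotProduct_eq_zero fun j => by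
      have := hv j
      have := hent r j
      omega
  rwa [hxv.unique hy]

end Rows

section Columns

variable {n m : ℕ} {A B : Matrix.SpecialLinearGroup (Fin n) ℤ}

/-- The automorphism of `SL_n` sending `g` to the reflection of `g⁻¹` in the antidiagonal. It is
induced by the symmetry of the Dynkin diagram and exchanges row and column matrices. -/
def graphAut {R : Type*} [CommRing R] :
    Matrix.SpecialLinearGroup (Fin n) R →* Matrix.SpecialLinearGroup (Fin n) R where
  toFun g := ⟨((g⁻¹).1ᵀ).submatrix Fin.revPerm Fin.revPerm, by
    rw [det_submatrix_equiv_self, det_transpose]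
    exact (g⁻¹).2⟩
  map_one' := by
    apply Subtype.ext
    change (((1 : Matrix.SpecialLinearGroup (Fin n) R)⁻¹).1ᵀ).submatrix _ _ = 1
    rw [inv_one, coe_one, transpose_one, submatrix_one_equiv]
  map_mul' g h := by
    apply Subtype.ext
    change (((g * h)⁻¹).1ᵀ).submatrix _ _ =
      ((g⁻¹).1ᵀ).submatrix _ Fin.revPerm * ((h⁻¹).1ᵀ).submatrix Fin.revPerm _
    rw [_root_.mul_inv_rev, coe_mul, transpose_mul, submatrix_mul_equiv]

section CommRing

variable {R : Type*} [CommRing R]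

lemma graphAut_inv_apply (g : Matrix.SpecialLinearGroup (Fin n) R) (i j : Fin n) :
    (graphAut g⁻¹).1 i j = g.1 j.rev i.rev := by
  change ((g⁻¹)⁻¹).1 j.rev i.rev = _
  rw [inv_inv]

lemma graphAut_graphAut (g : Matrix.SpecialLinearGroup (Fin n) R) : graphAut (graphAut g) = g := by
  apply Subtype.ext
  ext i j
  rw [← inv_inv (graphAut g), graphAut_inv_apply, ← map_inv, graphAut_inv_apply, Fin.rev_rev,
    Fin.rev_rev]

end CommRing

lemma graphAut_inv_Bmat (hB : B.1 = Bmat n) : graphAut B⁻¹ = B := by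
  apply Subtype.ext
  ext i j
  rw [graphAut_inv_apply, hB]
  simp only [Bmat, of_apply, Fin.val_rev]
  grind

lemma graphAut_inv_Amat (hA : A.1 = Amat n) (hB : B.1 = Bmat n) (hn : 2 ≤ n) :
    graphAut A⁻¹ = B⁻¹ ^ (n - 2) * A * (B⁻¹ ^ (n - 2))⁻¹ := by
  have h := (isTransvection_inv_pow_conj (k := n - 2) hA hB (by omega) 1).coe_eq
  rw [zpow_one, one_smul] at h
  apply Subtype.ext
  rw [h]
  clear h
  ext i j
  rw [graphAut_inv_apply, (isTransvection_Amat hA).coe_eq]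
  simp only [Matrix.add_apply, Matrix.one_apply, vecMulVec_apply, unitVec, Fin.val_rev,
    Fin.ext_iff]
  grind

lemma HasWord.map_graphAut (hA : A.1 = Amat n) (hB : B.1 = Bmat n) (hn : 2 ≤ n) {L : ℕ}
    {g : Matrix.SpecialLinearGroup (Fin n) ℤ} (hg : HasWord {A, B} L g) :
    HasWord {A, B} (L + 2 * n) (graphAut g) := by
  set b := B⁻¹ ^ (n - 2) with hb
  set θ := (MulAut.conj b⁻¹).toMonoidHom.comp (graphAut (n := n) (R := ℤ)) with hθ
  have hθ_apply : ∀ x, θ x = b⁻¹ * graphAut x * b := fun x => by simp [hθ]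
  have hθA : (θ A)⁻¹ = A := by
    rw [← map_inv, hθ_apply, graphAut_inv_Amat hA hB hn, ← hb]
    group
  have hθB : (θ B)⁻¹ = B := by
    rw [← map_inv, hθ_apply, graphAut_inv_Bmat hB, hb]
    group
  have hθg : HasWord {A, B} L (θ g) := hg.map θ fun s hs => by
    rcases hs with rfl | rfl
    · simp [hθA]
    · simp [hθB]
  have hbL : HasWord {A, B} ((n - 2) * 1) b := (HasWord.of_mem (by simp)).inv.pow _
  have h : graphAut g = b * θ g * b⁻¹ := by
    rw [hθ_apply]
    group
  rw [h]
  exact (hbL.conj hθg).mono (by omega)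

lemma IsColumnMatrix.isRowMatrix_graphAut_inv {g : Matrix.SpecialLinearGroup (Fin n) ℤ}
    (hg : IsColumnMatrix g.1) : IsRowMatrix (graphAut g⁻¹).1 := by
  obtain ⟨hdiag, c, hc⟩ := hg
  refine ⟨fun i => ?_, c.rev, fun i j hi hij => ?_⟩
  · rw [graphAut_inv_apply, hdiag]
  · rw [graphAut_inv_apply]
    refine hc _ _ ?_ fun h => hij (Fin.rev_injective h).symm
    rintro rfl
    exact hi (Fin.rev_rev i).symm

lemma IsColumnMatrix.hasWord (hA : A.1 = Amat n) (hB : B.1 = Bmat n) (hn : 3 ≤ n)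
    {x : Matrix.SpecialLinearGroup (Fin n) ℤ} (hx : IsColumnMatrix x.1)
    (hent : ∀ i j, 4 * |x.1 i j| ≤ evenLucas m) : HasWord {A, B} (200 * n * m + 70 * n) x := by
  have h := (hx.isRowMatrix_graphAut_inv.hasWord (m := m) hA hB hn fun i j => by
    rw [graphAut_inv_apply]
    exact hent _ _).map_graphAut hA hB (by omega)
  rw [graphAut_graphAut] at h
  simpa using h.inv.mono (by omega)

end Columns

section Logarithm

lemma four_mul_abs_le_evenLucas {K : ℕ} {a : ℤ} (ha : |a| ≤ (K : ℤ) - 1) :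
    4 * |a| ≤ evenLucas (Nat.log 2 K + 3) := by
  have hK : (K : ℤ) < 2 ^ (Nat.log 2 K + 1) := by
    exact_mod_cast Nat.lt_pow_succ_log_self one_lt_two K
  have hL := two_pow_le_evenLucas (Nat.log 2 K + 3)
  rw [pow_add] at hL hK
  omega

lemma natLog_wordLength_le (n : ℕ) {K : ℕ} (hK : 2 ≤ K) :
    (200 * n * (Nat.log 2 K + 3) + 70 * n : ℝ) ≤ 1200 * n * Real.log K + 400 * n := by
  have hlog : (Nat.log 2 K : ℝ) * Real.log 2 ≤ Real.log K :=
    (le_div_iff₀ (Real.log_pos one_lt_two)).1 (by exact_mod_cast Real.natLog_le_logb K 2)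
  have hone : (1 : ℝ) ≤ Nat.log 2 K := by exact_mod_cast Nat.log_pos one_lt_two hK
  have key : 200 * ((Nat.log 2 K : ℝ) + 3) + 70 ≤ 1200 * Real.log K + 400 := by
    nlinarith [Real.log_two_gt_d9]
  linarith [mul_le_mul_of_nonneg_left key n.cast_nonneg]

end Logarithm

/-- A row or column matrix in SL_n(ℤ) with entries in {−K+1, …, 0, …, K−1} is a product
of at most 1200·n·ln K + 400·n elements of {A, A⁻¹, B, B⁻¹}. -/
theorem rowOrColumnMatrix_short_word (n K : ℕ) (hn : 3 ≤ n) (hK : 1 ≤ K)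
    (A B M : Matrix.SpecialLinearGroup (Fin n) ℤ)
    (hA : (A : Matrix (Fin n) (Fin n) ℤ) = Amat n)
    (hB : (B : Matrix (Fin n) (Fin n) ℤ) = Bmat n)
    (hM : IsRowMatrix (M : Matrix (Fin n) (Fin n) ℤ) ∨
          IsColumnMatrix (M : Matrix (Fin n) (Fin n) ℤ))
    (hent : ∀ i j, |(M : Matrix (Fin n) (Fin n) ℤ) i j| ≤ (K : ℤ) - 1) :
    ∃ l : List (Matrix.SpecialLinearGroup (Fin n) ℤ),
      (l.length : ℝ) ≤ 1200 * n * Real.log K + 400 * n ∧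
      (∀ x ∈ l, x = A ∨ x = A⁻¹ ∨ x = B ∨ x = B⁻¹) ∧
      l.prod = M := by
  have hK2 : 2 ≤ K := by
    have hdiag : (M : Matrix (Fin n) (Fin n) ℤ) ⟨0, by omega⟩ ⟨0, by omega⟩ = 1 := by
      rcases hM with h | h <;> exact h.1 _
    have := hent ⟨0, by omega⟩ ⟨0, by omega⟩
    rw [hdiag, abs_one] at this
    omega
  obtain ⟨l, hlen, hl, hprod⟩ :
      HasWord {A, B} (200 * n * (Nat.log 2 K + 3) + 70 * n) M := by
    rcases hM with hM | hM
    · exact (hM.hasWord hA hB hn fun i j => four_mul_abs_le_evenLucas (hent i j)).mono (by omega)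
    · exact hM.hasWord hA hB hn fun i j => four_mul_abs_le_evenLucas (hent i j)
  refine ⟨l, (Nat.cast_le.2 hlen).trans ?_, fun x hx => ?_, hprod⟩
  · exact_mod_cast natLog_wordLength_le n hK2
  · simpa [inv_eq_iff_eq_inv, or_assoc, or_left_comm] using hl x hx
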